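/- arXiv:1912.00253 — 5 statements merged into one kernel-verified Lean document; each statement's English description precedes it below -/
import Mathlib

section
/- The minimum total idle time over all feasible partial assignments equals T times the maximum, taken over all sets W of station–slot pairs (j,k) with 0 ≤ k < K (including the empty set, so the maximum is nonnegative), of |W| minus the number of agents compatible with at least one slot in W. (This deficiency formula is the min-cut counterpart of the max-flow characterization in Theorem 1.) -/
/-!
The formula is the deficiency version of Hall's theorem for the bipartite graph between working
slots and agents. Write `d` for the maximal deficiency.

Lower bound (`deficiency_le_unoccupied`): the occupied slots of a set `W` are filled by distinct
agents compatible with a slot of `W`, so at least `|W| - |N(W)|` slots of `W` stay unoccupied.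

Attainment (`exists_feasible_unoccupied_le`): adjoin `d` dummy agents compatible with every slot.
Hall's condition then holds on the slot side, so there is a matching saturating all slots;
discarding the dummies leaves at most `d` slots unoccupied.
-/

/-- Agent `a` is compatible with working slot `w = (j, k)` if its arrival time
at station `j` is no later than `k·T`. -/
def Compatible {A : Type*} {N K : ℕ} (T : ℕ) (r : A → Fin N → ℕ)
    (a : A) (w : Fin N × Fin K) : Prop :=
  r a w.1 ≤ (w.2 : ℕ) * T


instance {A : Type*} {N K : ℕ} (T : ℕ) (r : A → Fin N → ℕ) (a : A) (w : Fin N × Fin K) :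
    Decidable (Compatible T r a w) := by
  unfold Compatible; infer_instance

/-- A feasible partial assignment: an injective map `f` from a subset `S` of the
agents to station–slot pairs such that every agent in `S` is compatible with its
assigned slot. -/
def FeasibleAssignment {A : Type*} {N K : ℕ} (T : ℕ) (r : A → Fin N → ℕ)
    (S : Finset A) (f : A → Fin N × Fin K) : Prop :=
  Set.InjOn f S ∧ ∀ a ∈ S, Compatible T r a (f a)

/-- The total idle time: `T` times the number of working slots (over all stations)
that are not occupied, i.e. not in the image of the assignment. -/
def totalIdleTime {A : Type*} [DecidableEq A] {N K : ℕ} (T : ℕ)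
    (S : Finset A) (f : A → Fin N × Fin K) : ℕ :=
  T * ((Finset.univ : Finset (Fin N × Fin K)) \ S.image f).card

/-- Weak duality: every set `W` of slots bounds the number of unoccupied slots from below. -/
lemma deficiency_le_unoccupied {A : Type*} [Fintype A] [DecidableEq A] {N K : ℕ} (T : ℕ)
    (r : A → Fin N → ℕ) (S : Finset A) (f : A → Fin N × Fin K)
    (hf : FeasibleAssignment T r S f) (W : Finset (Fin N × Fin K)) :
    W.card - (Finset.univ.filter (fun a : A => ∃ w ∈ W, Compatible T r a w)).card ≤
      ((Finset.univ : Finset (Fin N × Fin K)) \ S.image f).card := by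
  have hsub : W ⊆ (Finset.univ \ S.image f) ∪
      (Finset.univ.filter (fun a : A => ∃ w ∈ W, Compatible T r a w)).image f := by
    intro w hw
    by_cases h : w ∈ S.image f
    · obtain ⟨a, ha, rfl⟩ := Finset.mem_image.1 h
      exact Finset.mem_union_right _
        (Finset.mem_image_of_mem f (by simpa using ⟨_, _, hw, hf.2 a ha⟩))
    · exact Finset.mem_union_left _ (by simpa using h)
  have h1 := (Finset.card_le_card hsub).trans (Finset.card_union_le _ _)
  have h2 := Finset.card_image_le (f := f)
    (s := Finset.univ.filter (fun a : A => ∃ w ∈ W, Compatible T r a w))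
  omega

/-- If all deficiencies are at most `d`, some feasible assignment leaves at most `d` slots
unoccupied. Slots are assumed to exist because `f` needs a value on unassigned agents too. -/
lemma exists_feasible_unoccupied_le {A : Type*} [Fintype A] [DecidableEq A] {N K : ℕ} (T : ℕ)
    (r : A → Fin N → ℕ) [Nonempty (Fin N × Fin K)] (d : ℕ)
    (hd : ∀ W : Finset (Fin N × Fin K), W.card -
      (Finset.univ.filter (fun a : A => ∃ w ∈ W, Compatible T r a w)).card ≤ d) :
    ∃ (S : Finset A) (f : A → Fin N × Fin K), FeasibleAssignment T r S f ∧
      ((Finset.univ : Finset (Fin N × Fin K)) \ S.image f).card ≤ d := by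
  classical
  -- The neighbourhood of a slot once `d` universally compatible dummy agents are adjoined.
  let t : Fin N × Fin K → Finset (A ⊕ Fin d) := fun w =>
    (Finset.univ.filter (fun a : A => Compatible T r a w)).disjSum Finset.univ
  have hall : ∀ W : Finset (Fin N × Fin K), W.card ≤ (W.biUnion t).card := by
    intro W
    rcases W.eq_empty_or_nonempty with rfl | ⟨w₀, hw₀⟩
    · simp
    · have hsub : (Finset.univ.filter (fun a : A => ∃ w ∈ W, Compatible T r a w)).disjSum
          (Finset.univ : Finset (Fin d)) ⊆ W.biUnion t := by
        intro x hx
        rcases x with a | i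
        · simpa [t] using hx
        · simpa [t] using ⟨_, _, hw₀⟩
      have h1 := Finset.card_le_card hsub
      rw [Finset.card_disjSum, Finset.card_univ, Fintype.card_fin] at h1
      have h2 := hd W
      omega
  obtain ⟨g, hg, hgt⟩ := (Finset.all_card_le_biUnion_card_iff_exists_injective t).1 hall
  let S : Finset A := Finset.univ.filter (fun a => ∃ w, g w = Sum.inl a)
  have hS : ∀ a, ∃ w, a ∈ S → g w = Sum.inl a := by
    intro a
    by_cases h : ∃ w, g w = Sum.inl a
    · exact h.imp fun w hw _ => hw
    · exact ⟨Classical.arbitrary _, fun ha => absurd (Finset.mem_filter.1 ha).2 h⟩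
  choose f hf using hS
  refine ⟨S, f, ⟨?_, ?_⟩, ?_⟩
  · intro a ha b hb hab
    exact Sum.inl_injective ((hf a ha).symm.trans ((congrArg g hab).trans (hf b hb)))
  · intro a ha
    have h := hgt (f a)
    rw [hf a ha] at h
    simpa [t] using h
  · -- An unoccupied slot is matched to a dummy, and there are only `d` of these.
    have hsub : (Finset.univ \ S.image f).image g ⊆
        (Finset.univ : Finset (Fin d)).image Sum.inr := by
      intro x hx
      obtain ⟨w, hw, rfl⟩ := Finset.mem_image.1 hx
      rcases hgw : g w with a | i
      · have ha : a ∈ S := Finset.mem_filter.2 ⟨Finset.mem_univ _, w, hgw⟩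
        have hfw : f a = w := hg ((hf a ha).trans hgw.symm)
        exact absurd (Finset.mem_image.2 ⟨a, ha, hfw⟩) (Finset.mem_sdiff.1 hw).2
      · simp
    have h1 := Finset.card_le_card hsub
    rw [Finset.card_image_of_injective _ hg] at h1
    exact h1.trans (Finset.card_image_le.trans (by simp))

/-- Deficiency formula: the minimum total idle time over all feasible partial
assignments equals `T` times the maximum, over all sets `W` of station–slot pairs
(including `W = ∅`, so the maximum is nonnegative), of `|W|` minus the number of
agents compatible with at least one slot in `W`. -/
theorem min_idle_time_eq_deficiency
    {A : Type*} [Fintype A] [DecidableEq A]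
    (N K T : ℕ) (hT : 0 < T) (r : A → Fin N → ℕ) :
    sInf {n : ℕ | ∃ (S : Finset A) (f : A → Fin N × Fin K),
        FeasibleAssignment T r S f ∧ n = totalIdleTime T S f} =
    T * (Finset.univ : Finset (Finset (Fin N × Fin K))).sup
        (fun W => W.card -
          (Finset.univ.filter (fun a : A => ∃ w ∈ W, Compatible T r a w)).card) := by
  have hle : ∀ W : Finset (Fin N × Fin K), W.card -
      (Finset.univ.filter (fun a : A => ∃ w ∈ W, Compatible T r a w)).card ≤
      (Finset.univ : Finset (Finset (Fin N × Fin K))).sup (fun W => W.card -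
        (Finset.univ.filter (fun a : A => ∃ w ∈ W, Compatible T r a w)).card) :=
    fun W => Finset.le_sup (f := fun W : Finset (Fin N × Fin K) => W.card -
      (Finset.univ.filter (fun a : A => ∃ w ∈ W, Compatible T r a w)).card) (Finset.mem_univ W)
  rcases isEmpty_or_nonempty (Fin N × Fin K) with hE | hE
  · -- Without slots both sides vanish; if there are agents, the set on the left is empty and
    -- its `sInf` is `0` by convention.
    have hR : (Finset.univ : Finset (Finset (Fin N × Fin K))).sup (fun W => W.card -
        (Finset.univ.filter (fun a : A => ∃ w ∈ W, Compatible T r a w)).card) = 0 := by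
      rw [← Nat.bot_eq_zero, Finset.sup_eq_bot_iff]
      intro W _
      simp [Finset.eq_empty_of_isEmpty W]
    rw [hR, mul_zero, Nat.sInf_eq_zero]
    rcases isEmpty_or_nonempty A with hA | ⟨⟨a⟩⟩
    · left
      exact ⟨∅, isEmptyElim, ⟨by simp, by simp⟩, by simp [totalIdleTime]⟩
    · right
      exact Set.eq_empty_of_forall_notMem fun n ⟨_, f, _⟩ => hE.false (f a)
  · obtain ⟨S, f, hf, hc⟩ := exists_feasible_unoccupied_le T r _ hle
    apply le_antisymm
    · exact le_trans (Nat.sInf_le ⟨S, f, hf, rfl⟩) (Nat.mul_le_mul_left T hc)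
    · refine le_csInf ⟨_, S, f, hf, rfl⟩ ?_
      rintro n ⟨S', f', hf', rfl⟩
      exact Nat.mul_le_mul_left T
        (Finset.sup_le fun W _ => deficiency_le_unoccupied T r S' f' hf' W)
end

section
/- Let G = (V,E) be a finite simple graph, H ∈ ℕ, and let π₁, π₂ : {0,…,H} → V be valid paths with no vertex collision at any time (π₁(t) ≠ π₂(t) for all t ∈ {0,…,H}) that have an edge collision at some time t₀ < H (π₁(t₀) = π₂(t₀+1) and π₁(t₀+1) = π₂(t₀)). Define π₁' to agree with π₁ on {0,…,t₀} and with π₂ on {t₀+1,…,H}, and π₂' to agree with π₂ on {0,…,t₀} and with π₁ on {t₀+1,…,H}. Then: (1) π₁' and π₂' are valid paths, and in particular each of them waits at time t₀ (π₁'(t₀+1) = π₁'(t₀) and π₂'(t₀+1) = π₂'(t₀)); (2) for every time t, the unordered pair {π₁'(t), π₂'(t)} equals {π₁(t), π₂(t)}, so π₁' and π₂' start where π₁ and π₂ start and end in the same pair of final vertices; (3) π₁' and π₂' have no vertex collision at any time; (4) π₁' and π₂' have no edge collision at time t₀; and (5) for every time t ≠ t₀, π₁' and π₂' have an edge collision at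 t if and only if π₁ and π₂ do. -/
/-!
Away from `t₀`, each step of the swapped pair is a step of the original pair, possibly with the
two agents exchanged, and all the properties in question are symmetric in the agents. At `t₀`
the edge collision says precisely that the vertex entered by one agent is the vertex left by the
other, so after the exchange both agents wait; two agents waiting at distinct vertices do not
collide.
-/

/-- A valid path with horizon `H`: at every time step `t < H` the agent either
waits or moves along an edge of `G`. (Only the values on `{0,…,H}` are relevant.) -/
def ValidPath {V : Type*} (G : SimpleGraph V) (H : ℕ) (π : ℕ → V) : Prop :=
  ∀ t < H, π (t + 1) = π t ∨ G.Adj (π t) (π (t + 1))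

/-- Paths `π` and `π'` have an edge collision at time `t` if they traverse the
same edge in opposite directions between time steps `t` and `t+1`. -/
def EdgeCollision {V : Type*} (π π' : ℕ → V) (t : ℕ) : Prop :=
  π t = π' (t + 1) ∧ π (t + 1) = π' t

/-- Swapping the identities of two vertex-collision-free paths after an edge
collision at time `t₀`: the swapped paths are valid, both wait at `t₀`, occupy the
same unordered pair of vertices as the originals at every time, have no vertex
collision, have no edge collision at `t₀`, and have an edge collision at any other
time iff the original paths do. -/
theorem swap_resolves_edge_collision
    {V : Type*} [Fintype V] [DecidableEq V] (G : SimpleGraph V) (H : ℕ)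
    (π₁ π₂ : ℕ → V) (h₁ : ValidPath G H π₁) (h₂ : ValidPath G H π₂)
    (hvc : ∀ t ≤ H, π₁ t ≠ π₂ t)
    (t₀ : ℕ) (ht₀ : t₀ < H) (hec : EdgeCollision π₁ π₂ t₀)
    (π₁' π₂' : ℕ → V)
    (hπ₁' : ∀ t, π₁' t = if t ≤ t₀ then π₁ t else π₂ t)
    (hπ₂' : ∀ t, π₂' t = if t ≤ t₀ then π₂ t else π₁ t) :
    (ValidPath G H π₁' ∧ ValidPath G H π₂' ∧
      π₁' (t₀ + 1) = π₁' t₀ ∧ π₂' (t₀ + 1) = π₂' t₀) ∧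
    (∀ t ≤ H, ({π₁' t, π₂' t} : Set V) = {π₁ t, π₂ t}) ∧
    (∀ t ≤ H, π₁' t ≠ π₂' t) ∧
    ¬ EdgeCollision π₁' π₂' t₀ ∧
    (∀ t < H, t ≠ t₀ → (EdgeCollision π₁' π₂' t ↔ EdgeCollision π₁ π₂ t)) := by
  obtain ⟨hc₁, hc₂⟩ := hec
  -- Up to `t₀` the new paths are the old ones; afterwards they are the old ones exchanged.
  have early : ∀ t ≤ t₀, π₁' t = π₁ t ∧ π₂' t = π₂ t := fun t ht => by
    simp [hπ₁', hπ₂', ht]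
  have late : ∀ t, t₀ < t → π₁' t = π₂ t ∧ π₂' t = π₁ t := fun t ht => by
    simp [hπ₁', hπ₂', ht.not_ge]
  obtain ⟨e₁, e₂⟩ := early t₀ le_rfl
  obtain ⟨l₁, l₂⟩ := late (t₀ + 1) (Nat.lt_succ_self t₀)
  have wait₁ : π₁' (t₀ + 1) = π₁' t₀ := by rw [l₁, e₁, hc₁]
  have wait₂ : π₂' (t₀ + 1) = π₂' t₀ := by rw [l₂, e₂, hc₂]
  have hvc' : ∀ t ≤ H, π₁' t ≠ π₂' t := by
    intro t ht
    rcases le_or_gt t t₀ with h | h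
    · rw [(early t h).1, (early t h).2]
      exact hvc t ht
    · rw [(late t h).1, (late t h).2]
      exact (hvc t ht).symm
  refine ⟨⟨?_, ?_, wait₁, wait₂⟩, ?_, hvc', ?_, ?_⟩
  · intro t ht
    rcases lt_trichotomy t t₀ with h | rfl | h
    · rw [(early t h.le).1, (early (t + 1) h).1]
      exact h₁ t ht
    · exact Or.inl wait₁
    · rw [(late t h).1, (late (t + 1) (by omega)).1]
      exact h₂ t ht
  · intro t ht
    rcases lt_trichotomy t t₀ with h | rfl | h
    · rw [(early t h.le).2, (early (t + 1) h).2]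
      exact h₂ t ht
    · exact Or.inl wait₂
    · rw [(late t h).2, (late (t + 1) (by omega)).2]
      exact h₁ t ht
  · intro t _
    rcases le_or_gt t t₀ with h | h
    · rw [(early t h).1, (early t h).2]
    · rw [(late t h).1, (late t h).2, Set.pair_comm]
  · -- Since `π₂'` waits at `t₀`, an edge collision there would be a vertex collision.
    rintro ⟨h, -⟩
    exact hvc' t₀ ht₀.le (h.trans wait₂)
  · intro t _ hne
    unfold EdgeCollision
    rcases lt_or_gt_of_ne hne with h | h
    · rw [(early t h.le).1, (early t h.le).2, (early (t + 1) h).1, (early (t + 1) h).2]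
    · -- Both steps are exchanged, and edge collision is symmetric in the two paths.
      rw [(late t h).1, (late t h).2, (late (t + 1) (by omega)).1,
        (late (t + 1) (by omega)).2]
      exact ⟨fun ⟨a, b⟩ => ⟨b.symm, a.symm⟩, fun ⟨a, b⟩ => ⟨b.symm, a.symm⟩⟩
end

section
/- Let G = (V,E) be a finite simple graph, H ∈ ℕ, and let (π_i)_{i∈I} be a finite family of valid paths π_i : {0,…,H} → V that is pairwise vertex-collision-free (π_i(t) ≠ π_j(t) for all i ≠ j and all t). Suppose π_{i₁} and π_{i₂} have an edge collision at time t₀ < H. Let the new family be obtained from (π_i) by swapping the restrictions of π_{i₁} and π_{i₂} to {t₀+1,…,H} and leaving all other paths unchanged. Then the new family consists of valid paths, is pairwise vertex-collision-free, occupies at each time t the same multiset of vertices as the original family, and has strictly fewer edge collisions, where the number of edge collisions of a family is the number of pairs ({i,j}, t) consisting of an unordered pair of distinct indices and a time t < H at which π_i and π_j have an edge collision. -/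
instance {V : Type*} [DecidableEq V] (π π' : ℕ → V) (t : ℕ) :
    Decidable (EdgeCollision π π' t) := by
  unfold EdgeCollision; infer_instance

/-- The number of edge collisions of a family of paths: the number of pairs
`({i,j}, t)` of an unordered pair of distinct indices and a time `t < H` at which
`π i` and `π j` have an edge collision. -/
def numEdgeCollisions {V I : Type*} [Fintype I] [DecidableEq I] [DecidableEq V]
    (H : ℕ) (π : I → ℕ → V) : ℕ :=
  (((Finset.univ : Finset (Sym2 I)) ×ˢ Finset.range H).filter
    (fun p : Sym2 I × ℕ =>
      ∃ i j : I, p.1 = s(i, j) ∧ i ≠ j ∧ EdgeCollision (π i) (π j) p.2)).card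

/-- The permutation of indices by which the swapped family is the old one reindexed at time `t`. -/
def swapAt {I : Type*} [DecidableEq I] (i₁ i₂ : I) (t₀ t : ℕ) : Equiv.Perm I :=
  if t ≤ t₀ then 1 else Equiv.swap i₁ i₂

lemma swapAt_succ {I : Type*} [DecidableEq I] (i₁ i₂ : I) {t₀ t : ℕ} (h : t ≠ t₀) :
    swapAt i₁ i₂ t₀ (t + 1) = swapAt i₁ i₂ t₀ t := by
  have : t + 1 ≤ t₀ ↔ t ≤ t₀ := by omega
  simp only [swapAt, this]

lemma eq_swapAt {V I : Type*} [DecidableEq I] {π π' : I → ℕ → V} {i₁ i₂ : I} {t₀ : ℕ}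
    (h₁ : ∀ t, π' i₁ t = if t ≤ t₀ then π i₁ t else π i₂ t)
    (h₂ : ∀ t, π' i₂ t = if t ≤ t₀ then π i₂ t else π i₁ t)
    (ho : ∀ i, i ≠ i₁ → i ≠ i₂ → π' i = π i) (i : I) (t : ℕ) :
    π' i t = π (swapAt i₁ i₂ t₀ t i) t := by
  by_cases hi₁ : i = i₁
  · subst hi₁
    rw [h₁]
    by_cases ht : t ≤ t₀ <;> simp [swapAt, ht]
  by_cases hi₂ : i = i₂
  · subst hi₂
    rw [h₂]
    by_cases ht : t ≤ t₀ <;> simp [swapAt, ht]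
  rw [ho i hi₁ hi₂]
  by_cases ht : t ≤ t₀ <;> simp [swapAt, ht, Equiv.swap_apply_of_ne_of_ne hi₁ hi₂]

/-- An agent that waits at time `t` has no edge collision then: its partner would have to start
from the same vertex. -/
lemma not_edgeCollision_of_wait {V : Type*} {p q : ℕ → V} {t : ℕ} (hw : p (t + 1) = p t)
    (hpq : p t ≠ q t) : ¬ EdgeCollision p q t :=
  fun h => hpq (hw.symm.trans h.2)

lemma EdgeCollision.symm {V : Type*} {p q : ℕ → V} {t : ℕ} (h : EdgeCollision p q t) :
    EdgeCollision q p t :=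
  ⟨h.2.symm, h.1.symm⟩

/-- Swapping the identities of two paths of a pairwise vertex-collision-free
family after an edge collision at time `t₀` yields a family of valid paths that is
pairwise vertex-collision-free, occupies at each time the same multiset of
vertices, and has strictly fewer edge collisions. -/
theorem swap_decreases_edge_collisions
    {V I : Type*} [Fintype V] [DecidableEq V] [Fintype I] [DecidableEq I]
    (G : SimpleGraph V) (H : ℕ) (π : I → ℕ → V)
    (hvalid : ∀ i, ValidPath G H (π i))
    (hvc : ∀ i j, i ≠ j → ∀ t ≤ H, π i t ≠ π j t)
    (i₁ i₂ : I) (hne : i₁ ≠ i₂)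
    (t₀ : ℕ) (ht₀ : t₀ < H) (hec : EdgeCollision (π i₁) (π i₂) t₀)
    (π' : I → ℕ → V)
    (hπ'₁ : ∀ t, π' i₁ t = if t ≤ t₀ then π i₁ t else π i₂ t)
    (hπ'₂ : ∀ t, π' i₂ t = if t ≤ t₀ then π i₂ t else π i₁ t)
    (hπ'other : ∀ i, i ≠ i₁ → i ≠ i₂ → π' i = π i) :
    (∀ i, ValidPath G H (π' i)) ∧
    (∀ i j, i ≠ j → ∀ t ≤ H, π' i t ≠ π' j t) ∧
    (∀ t ≤ H, Multiset.map (fun i => π' i t) Finset.univ.val =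
      Multiset.map (fun i => π i t) Finset.univ.val) ∧
    numEdgeCollisions H π' < numEdgeCollisions H π := by
  have key := eq_swapAt hπ'₁ hπ'₂ hπ'other
  have wait₁ : π' i₁ (t₀ + 1) = π' i₁ t₀ := by
    rw [hπ'₁, hπ'₁]; simpa using hec.1.symm
  have wait₂ : π' i₂ (t₀ + 1) = π' i₂ t₀ := by
    rw [hπ'₂, hπ'₂]; simpa using hec.2
  have hvc' : ∀ i j, i ≠ j → ∀ t ≤ H, π' i t ≠ π' j t := by
    intro i j hij t ht
    rw [key, key]
    exact hvc _ _ ((swapAt i₁ i₂ t₀ t).injective.ne hij) t ht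
  refine ⟨?_, hvc', ?_, ?_⟩
  · intro i t ht
    by_cases h : t = t₀
    · subst h
      by_cases hi₁ : i = i₁
      · exact Or.inl (hi₁ ▸ wait₁)
      by_cases hi₂ : i = i₂
      · exact Or.inl (hi₂ ▸ wait₂)
      rw [hπ'other i hi₁ hi₂]
      exact hvalid i t ht
    · rw [key, key, swapAt_succ i₁ i₂ h]
      exact hvalid _ t ht
  · intro t _
    simp only [key]
    have h := congrArg Finset.val (Finset.map_univ_equiv (swapAt i₁ i₂ t₀ t))
    rw [Finset.map_val] at h
    conv_rhs => rw [← h]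
    rw [Multiset.map_map]
    rfl
  · unfold numEdgeCollisions
    refine lt_of_le_of_lt (Finset.card_le_card_of_injOn
      (t := Finset.erase _ (s(i₁, i₂), t₀))
      (fun p : Sym2 I × ℕ => (Sym2.map (swapAt i₁ i₂ t₀ p.2) p.1, p.2)) ?_ ?_)
      (Finset.card_erase_lt_of_mem (a := (s(i₁, i₂), t₀)) ?_)
    · rintro ⟨p, t⟩ hp
      simp only [Finset.coe_filter, Finset.mem_product, Finset.mem_univ, Finset.mem_range,
        true_and, Set.mem_ofPred_eq] at hp
      obtain ⟨ht, i, j, rfl, hij, hcol⟩ := hp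
      simp only [Finset.coe_erase, Finset.coe_filter, Finset.mem_product, Finset.mem_univ,
        Finset.mem_range, true_and, Set.mem_sdiff, Set.mem_ofPred_eq, Set.mem_singleton_iff,
        Sym2.map_mk, Prod.mk.injEq, not_and]
      by_cases h : t = t₀
      · subst h
        have ne₁ : ∀ a b, a ≠ b → EdgeCollision (π' a) (π' b) t → a ≠ i₁ := by
          rintro a b hab hc rfl
          exact not_edgeCollision_of_wait wait₁ (hvc' _ _ hab t ht.le) hc
        have ne₂ : ∀ a b, a ≠ b → EdgeCollision (π' a) (π' b) t → a ≠ i₂ := by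
          rintro a b hab hc rfl
          exact not_edgeCollision_of_wait wait₂ (hvc' _ _ hab t ht.le) hc
        have hi₁ := ne₁ i j hij hcol
        have hi₂ := ne₂ i j hij hcol
        have hj₁ := ne₁ j i hij.symm hcol.symm
        have hj₂ := ne₂ j i hij.symm hcol.symm
        rw [hπ'other i hi₁ hi₂, hπ'other j hj₁ hj₂] at hcol
        have hs : swapAt i₁ i₂ t t = 1 := by simp [swapAt]
        simp only [hs, Equiv.Perm.one_apply]
        refine ⟨⟨ht, i, j, rfl, hij, hcol⟩, fun he => ?_⟩
        rcases Sym2.eq_iff.1 he with he | he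
        · exact absurd he.1 hi₁
        · exact absurd he.1 hi₂
      · refine ⟨⟨ht, _, _, rfl, (swapAt i₁ i₂ t₀ t).injective.ne hij, ?_⟩, fun _ => h⟩
        simpa only [EdgeCollision, key, swapAt_succ i₁ i₂ h] using hcol
    · rintro ⟨p, t⟩ _ ⟨q, u⟩ _ hpq
      simp only [Prod.mk.injEq] at hpq
      obtain ⟨h, rfl⟩ := hpq
      rw [Sym2.map.injective (swapAt i₁ i₂ t₀ t).injective h]
    · simp only [Finset.mem_filter, Finset.mem_product, Finset.mem_univ, Finset.mem_range, true_and]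
      exact ⟨ht₀, i₁, i₂, rfl, hne, hec⟩
end

section
/- Let G = (V,E) be a finite simple graph, H ∈ ℕ, and let (π_i)_{i∈I} be a finite family of valid paths π_i : {0,…,H} → V that is pairwise vertex-collision-free (π_i(t) ≠ π_j(t) for all i ≠ j and all t). Then there exists a family (π_i')_{i∈I} of valid paths such that π_i'(0) = π_i(0) for every i, the family is pairwise vertex-collision-free and pairwise edge-collision-free, and for every time t ∈ {0,…,H} the multiset {π_i'(t) : i ∈ I} equals the multiset {π_i(t) : i ∈ I}; in particular, the set of vertices occupied at the final time H is unchanged. (This is the full post-processing claim for Anonymous MAPF: vertex-disjoint space-time paths can always be converted into fully collision-free paths by repeatedly swapping the identities of colliding agents.) -/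
/-- Uncrossing one time step from positions `a` to positions `b`: after relabelling the targets by
a suitable permutation, every agent either makes an original move or waits, and no two distinct
agents swap positions. -/
theorem exists_swap_perm {V I : Type*} (a b : I → V) (ha : Function.Injective a)
    (hb : Function.Injective b) :
    ∃ τ : Equiv.Perm I, (∀ i, b (τ i) = a i ∨ τ i = i) ∧
      ∀ i j, i ≠ j → ¬ (a i = b (τ j) ∧ b (τ i) = a j) := by
  classical
  -- A stationary agent is its own partner, which is harmless.
  let f : I → I := fun i => if h : ∃ j, b j = a i ∧ a j = b i then h.choose else i
  have f_eq : ∀ i j, b j = a i → a j = b i → f i = j := by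
    intro i j h1 h2
    have h : ∃ j, b j = a i ∧ a j = b i := ⟨j, h1, h2⟩
    have hf : f i = h.choose := dif_pos h
    rw [hf]
    exact hb (h.choose_spec.1.trans h1.symm)
  have f_cases : ∀ i, (b (f i) = a i ∧ a (f i) = b i) ∨ f i = i := by
    intro i
    by_cases h : ∃ j, b j = a i ∧ a j = b i
    · obtain ⟨j, h1, h2⟩ := h
      rw [f_eq i j h1 h2]
      exact Or.inl ⟨h1, h2⟩
    · exact Or.inr (dif_neg h)
  have f_inv : Function.Involutive f := by
    intro i
    rcases f_cases i with ⟨h1, h2⟩ | h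
    · exact f_eq _ _ h2.symm h1.symm
    · rw [h, h]
  refine ⟨f_inv.toPerm, fun i => (f_cases i).imp And.left id, ?_⟩
  rintro i j hij ⟨h1, h2⟩
  simp only [Function.Involutive.coe_toPerm] at h1 h2
  rcases f_cases i with ⟨hi, -⟩ | hi
  · exact hij (ha (hi.symm.trans h2))
  rcases f_cases j with ⟨hj, -⟩ | hj
  · exact hij (ha (h1.trans hj))
  -- Both agents kept their original moves, so they were partners after all.
  rw [hj] at h1
  rw [hi] at h2
  exact hij (hi.symm.trans (f_eq i j h1.symm h2.symm))

/-- Post processing for Anonymous MAPF: any pairwise vertex-collision-free family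
of valid paths can be converted into a family of valid paths with the same starts
that is pairwise free of both vertex and edge collisions and occupies at each time
the same multiset of vertices (in particular, the same final vertices). -/
theorem vertex_disjoint_paths_to_collision_free
    {V I : Type*} [Fintype V] [DecidableEq V] [Fintype I] [DecidableEq I]
    (G : SimpleGraph V) (H : ℕ) (π : I → ℕ → V)
    (hvalid : ∀ i, ValidPath G H (π i))
    (hvc : ∀ i j, i ≠ j → ∀ t ≤ H, π i t ≠ π j t) :
    ∃ π' : I → ℕ → V,
      (∀ i, ValidPath G H (π' i)) ∧
      (∀ i, π' i 0 = π i 0) ∧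
      (∀ i j, i ≠ j → ∀ t ≤ H, π' i t ≠ π' j t) ∧
      (∀ i j, i ≠ j → ∀ t < H, ¬ EdgeCollision (π' i) (π' j) t) ∧
      (∀ t ≤ H, Multiset.map (fun i => π' i t) Finset.univ.val =
        Multiset.map (fun i => π i t) Finset.univ.val) := by
  classical
  have inj : ∀ t ≤ H, Function.Injective (fun i => π i t) := by
    intro t ht i j h
    by_contra hij
    exact hvc i j hij t ht h
  have step : ∀ t, ∃ τ : Equiv.Perm I, t < H →
      (∀ i, π (τ i) (t + 1) = π i t ∨ τ i = i) ∧
      ∀ i j, i ≠ j → ¬ (π i t = π (τ j) (t + 1) ∧ π (τ i) (t + 1) = π j t) := by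
    intro t
    by_cases ht : t < H
    · obtain ⟨τ, hτ⟩ := exists_swap_perm _ _ (inj t ht.le) (inj (t + 1) ht)
      exact ⟨τ, fun _ => hτ⟩
    · exact ⟨1, fun h => absurd h ht⟩
  choose τ hτ using step
  -- `σ t i` is the original path that the relabelled agent `i` occupies at time `t`.
  let σ : ℕ → Equiv.Perm I := fun t => Nat.rec 1 (fun s p => τ s * p) t
  have hσ : ∀ t i, σ (t + 1) i = τ t (σ t i) := fun _ _ => rfl
  refine ⟨fun i t => π (σ t i) t, ?_, fun _ => rfl, ?_, ?_, ?_⟩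
  · intro i t ht
    simp only [hσ]
    rcases (hτ t ht).1 (σ t i) with h | h
    · exact Or.inl h
    · rw [h]
      exact hvalid _ t ht
  · intro i j hij t ht
    exact hvc _ _ ((σ t).injective.ne hij) t ht
  · intro i j hij t ht hc
    exact (hτ t ht).2 _ _ ((σ t).injective.ne hij) hc
  · intro t _
    have h := Multiset.map_univ_val_equiv (σ t)
    conv_rhs => rw [← h, Multiset.map_map]
    rfl
end

section
/- Let G = (V,E) be a finite simple graph, H ∈ ℕ, let (s_i)_{i∈I} be distinct start vertices indexed by a finite set I, and let F ⊆ V be a set of target vertices with |F| = |I|. Then there exists a family of valid paths (π_i)_{i∈I} with π_i(0) = s_i for all i, pairwise free of both vertex and edge collisions, and with {π_i(H) : i ∈ I} = F, if and only if there exists a family of valid paths with π_i(0) = s_i for all i, pairwise free of vertex collisions only, and with {π_i(H) : i ∈ I} = F. (Hence, for Anonymous MAPF, forbidding only vertex collisions and forbidding both vertex and edge collisions admit exactly the same achievable target occupancies.) -/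
/-- A single step `x → y` without vertex collisions can be replaced by a step `x → z` onto the same
set of vertices in which no two agents swap: swapping agents wait, all others move as before. -/
lemma exists_swap_free_step {V I : Type*} [DecidableEq V] [Fintype I]
    (G : SimpleGraph V) (x y : I → V) (hx : Function.Injective x) (hy : Function.Injective y)
    (hstep : ∀ i, y i = x i ∨ G.Adj (x i) (y i)) :
    ∃ z : I → V, Function.Injective z ∧ (∀ i, z i = x i ∨ G.Adj (x i) (z i)) ∧
      (∀ i j, i ≠ j → ¬ (x i = z j ∧ z i = x j)) ∧
      Finset.univ.image z = Finset.univ.image y := by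
  classical
  let z : I → V := fun i => if ∃ j, y i = x j ∧ y j = x i then x i else y i
  have z_swap : ∀ i j, y i = x j → y j = x i → z i = x i :=
    fun i j h h' => if_pos ⟨j, h, h'⟩
  have z_cases : ∀ i, (∃ j, y i = x j ∧ y j = x i ∧ z i = x i) ∨
      ((¬ ∃ j, y i = x j ∧ y j = x i) ∧ z i = y i) := by
    intro i
    by_cases h : ∃ j, y i = x j ∧ y j = x i
    · obtain ⟨j, h1, h2⟩ := h
      exact Or.inl ⟨j, h1, h2, z_swap i j h1 h2⟩
    · exact Or.inr ⟨h, if_neg h⟩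
  have hz : Function.Injective z := by
    intro i j hij
    rcases z_cases i with ⟨k, hk, hk', hi⟩ | ⟨hn, hi⟩ <;>
      rcases z_cases j with ⟨l, hl, hl', hj⟩ | ⟨hm, hj⟩
    · exact hx (hi.symm.trans (hij.trans hj))
    · -- `i` swaps with `k`, and `j` also arrives at `x i`, so `j = k` swaps with `i`
      have hkj : k = j := hy (hk'.trans (hi.symm.trans (hij.trans hj)))
      subst hkj
      exact absurd ⟨i, hk', hk⟩ hm
    · have hli : l = i := hy (hl'.trans (hj.symm.trans (hij.symm.trans hi)))
      subst hli
      exact absurd ⟨j, hl', hl⟩ hn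
    · exact hy (hi.symm.trans (hij.trans hj))
  refine ⟨z, hz, ?_, ?_, ?_⟩
  · intro i
    rcases z_cases i with ⟨_, _, _, hi⟩ | ⟨_, hi⟩
    · exact Or.inl hi
    · rw [hi]
      exact hstep i
  · rintro i j hij ⟨h1, h2⟩
    rcases z_cases i with ⟨_, _, _, hi⟩ | ⟨hn, hi⟩
    · exact hij (hx (hi.symm.trans h2))
    rcases z_cases j with ⟨_, _, _, hj⟩ | ⟨_, hj⟩
    · exact hij (hx (h1.trans hj))
    exact hn ⟨j, hi.symm.trans h2, hj.symm.trans h1.symm⟩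
  · -- both images have `|I|` elements, so one inclusion suffices
    apply Finset.eq_of_subset_of_card_le
    · intro v hv
      obtain ⟨i, -, rfl⟩ := Finset.mem_image.1 hv
      rcases z_cases i with ⟨k, _, hk, hi⟩ | ⟨_, hi⟩
      · exact Finset.mem_image.2 ⟨k, Finset.mem_univ _, hk.trans hi.symm⟩
      · exact Finset.mem_image.2 ⟨i, Finset.mem_univ _, hi.symm⟩
    · rw [Finset.card_image_of_injective _ hz, Finset.card_image_of_injective _ hy]

/-- A family of valid paths without vertex collisions can be replaced by one that has no edge
collisions either, with the same starts and the same set of final vertices. -/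
lemma exists_swap_free_paths {V I : Type*} [DecidableEq V] [Fintype I]
    (G : SimpleGraph V) (π : I → ℕ → V) (H : ℕ)
    (hval : ∀ i, ValidPath G H (π i))
    (hvert : ∀ i j, i ≠ j → ∀ t ≤ H, π i t ≠ π j t) :
    ∃ ρ : I → ℕ → V,
      (∀ i, ValidPath G H (ρ i)) ∧
      (∀ i, ρ i 0 = π i 0) ∧
      (∀ i j, i ≠ j → ∀ t ≤ H, ρ i t ≠ ρ j t) ∧
      (∀ i j, i ≠ j → ∀ t < H, ¬ EdgeCollision (ρ i) (ρ j) t) ∧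
      Finset.univ.image (fun i => ρ i H) = Finset.univ.image (fun i => π i H) := by
  induction H with
  | zero => exact ⟨π, hval, fun _ => rfl, hvert, fun _ _ _ t ht => absurd ht (by omega), rfl⟩
  | succ H ih =>
    obtain ⟨ρ, rval, rstart, rvert, redge, rimg⟩ :=
      ih (fun i t ht => hval i t (by omega)) (fun i j hij t ht => hvert i j hij t (by omega))
    have hinj : Function.Injective fun i => ρ i H := fun i j h => by
      by_contra hij
      exact rvert i j hij H le_rfl h
    -- `e i` is the original agent standing where the new agent `i` stands at time `H`
    have hmatch : ∀ i, ∃ j, π j H = ρ i H := by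
      intro i
      have hi : ρ i H ∈ Finset.univ.image (fun i => π i H) := by
        rw [← rimg]
        exact Finset.mem_image_of_mem (fun i => ρ i H) (Finset.mem_univ i)
      simpa using hi
    choose e he using hmatch
    have e_inj : Function.Injective e := fun i j h => hinj (by
      change ρ i H = ρ j H
      rw [← he i, ← he j, h])
    have e_surj : Function.Surjective e := Finite.surjective_of_injective e_inj
    obtain ⟨z, hz, zstep, zswap, zimg⟩ := exists_swap_free_step G (fun i => ρ i H)
      (fun i => π (e i) (H + 1)) hinj
      (fun i j h => by
        by_contra hij
        exact hvert _ _ (e_inj.ne hij) (H + 1) le_rfl h)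
      (fun i => by
        have h := hval (e i) H (by omega)
        rwa [he i] at h)
    let ρ' : I → ℕ → V := fun i t => if t ≤ H then ρ i t else z i
    have old : ∀ i t, t ≤ H → ρ' i t = ρ i t := fun i t ht => if_pos ht
    have new : ∀ i, ρ' i (H + 1) = z i := fun i => if_neg (by omega)
    refine ⟨ρ', ?_, ?_, ?_, ?_, ?_⟩
    · intro i t ht
      rcases Nat.lt_succ_iff_lt_or_eq.1 ht with h | rfl
      · rw [old i t h.le, old i (t + 1) h]
        exact rval i t h
      · rw [old i t le_rfl, new]
        exact zstep i
    · intro i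
      rw [old i 0 (Nat.zero_le _), rstart]
    · intro i j hij t ht
      rcases Nat.le_succ_iff.1 ht with h | rfl
      · rw [old i t h, old j t h]
        exact rvert i j hij t h
      · rw [new, new]
        exact hz.ne hij
    · intro i j hij t ht
      unfold EdgeCollision
      rcases Nat.lt_succ_iff_lt_or_eq.1 ht with h | rfl
      · rw [old i t h.le, old j t h.le, old i (t + 1) h, old j (t + 1) h]
        exact redge i j hij t h
      · rw [old i t le_rfl, old j t le_rfl, new, new]
        exact zswap i j hij
    · simp only [new]
      rw [zimg]
      ext v
      simp only [Finset.mem_image, Finset.mem_univ, true_and]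
      exact (e_surj.exists (p := fun k => π k (H + 1) = v)).symm

/-- For Anonymous MAPF with distinct starts `s_i` and a target set `F` with
`|F| = |I|`: there is a family of valid paths from the starts ending on exactly
`F`, pairwise free of both vertex and edge collisions, iff there is such a family
that is pairwise free of vertex collisions only. -/
theorem anonymous_mapf_edge_collisions_irrelevant
    {V I : Type*} [Fintype V] [DecidableEq V] [Fintype I] [DecidableEq I]
    (G : SimpleGraph V) (H : ℕ) (s : I → V) (hs : Function.Injective s)
    (F : Finset V) (hF : F.card = Fintype.card I) :
    (∃ π : I → ℕ → V,
      (∀ i, ValidPath G H (π i)) ∧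
      (∀ i, π i 0 = s i) ∧
      (∀ i j, i ≠ j → ∀ t ≤ H, π i t ≠ π j t) ∧
      (∀ i j, i ≠ j → ∀ t < H, ¬ EdgeCollision (π i) (π j) t) ∧
      Finset.univ.image (fun i => π i H) = F) ↔
    (∃ π : I → ℕ → V,
      (∀ i, ValidPath G H (π i)) ∧
      (∀ i, π i 0 = s i) ∧
      (∀ i j, i ≠ j → ∀ t ≤ H, π i t ≠ π j t) ∧
      Finset.univ.image (fun i => π i H) = F) := by
  constructor
  · rintro ⟨π, hval, hstart, hvert, -, himg⟩
    exact ⟨π, hval, hstart, hvert, himg⟩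
  · rintro ⟨π, hval, hstart, hvert, himg⟩
    obtain ⟨ρ, rval, rstart, rvert, redge, rimg⟩ := exists_swap_free_paths G π H hval hvert
    exact ⟨ρ, rval, fun i => (rstart i).trans (hstart i), rvert, redge, rimg.trans himg⟩
end
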